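/- arXiv:1405.5652 — 2 statements merged into one kernel-verified Lean document; each statement's English description precedes it below -/
import Mathlib

section
/- In the generalized quaternion algebra H(γ₁,γ₂) with γ₁,γ₂ > 0, every polynomial function of the form f(x) = a₀xa₁x⋯a_{n-1}xa_n + φ(x), where a₀,…,a_n are nonzero elements of H(γ₁,γ₂) and φ(x) is a finite sum of monomials b₀xb₁x⋯b_{t-1}xb_t of degree t < n, has at least one root in H(γ₁,γ₂). -/
open Quaternion

/-- The value at `x` of the monomial `b₀ x b₁ x ⋯ b_{t-1} x b_t` of degree `t` with
coefficients `b : Fin (t+1) → ℍ[ℝ, c₁, c₂]`. -/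
def monval {c₁ c₂ : ℝ} : (t : ℕ) → (Fin (t + 1) → ℍ[ℝ, c₁, c₂]) → ℍ[ℝ, c₁, c₂] → ℍ[ℝ, c₁, c₂]
  | 0, b, _ => b 0
  | t + 1, b, x => b 0 * x * monval t (fun i => b i.succ) x

/-!
Let `N` be a smooth radial map collapsing the exterior of the unit ball to the unit sphere. For a
proper `C¹` map `F`, the integral of `det D(N ∘ F)` is a multiple of the Brouwer degree of `F`.
The Jacobian determinant is a null Lagrangian: its integral over a compact set depends only on the
map near the boundary of that set. Hence the degree integral is unchanged under perturbations of `F`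
that are small relative to `‖F‖` near infinity, and it vanishes if `F` has no zero, since `F` can
then be scaled up until `‖F‖ ≥ 1` everywhere.

For `f` as in the theorem, this permits dropping the lower-order monomials and, as `ℍ \ {0}` is
connected, deforming all coefficients of the leading monomial to `1`. The degree integral of `x ^ n`
is positive: any `x` commutes with some `J` with `J² = -1`, so the derivative of the power map at
`x` is complex linear for the complex structure given by `J` and has nonnegative determinant. The
general quaternion algebra reduces to `ℍ` by rescaling `i` and `j`.
-/

section DetFDeriv

open MeasureTheory Set Filter Topology
open scoped ContDiff Manifold NNReal

theorem det_eq_sum_det_smul_one_add {𝕜 V ι : Type*} [Field 𝕜] [AddCommGroup V] [Module 𝕜 V]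
    [FiniteDimensional 𝕜 V] [DecidableEq ι] {s : Finset ι} {v : ι → 𝕜} (hv : InjOn v s)
    (hs : Module.finrank 𝕜 V < s.card) (A : Module.End 𝕜 V) :
    A.det = ∑ i ∈ s, (v i • 1 + A).det * (Lagrange.basis s v i).eval 0 := by
  have eval_charpoly_neg (t : 𝕜) : (-A).charpoly.eval t = (t • 1 + A).det := by
    rw [LinearMap.eval_charpoly, Algebra.algebraMap_eq_smul_one, sub_neg_eq_add]
  have degree_lt : (-A).charpoly.degree < s.card := by
    rw [Polynomial.degree_eq_natDegree (LinearMap.charpoly_monic _).ne_zero,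
      LinearMap.charpoly_natDegree]
    exact_mod_cast hs
  have interpolation := congrArg (Polynomial.eval 0) (Lagrange.eq_interpolate hv degree_lt)
  simpa [Lagrange.interpolate_apply, Polynomial.eval_finsetSum, eval_charpoly_neg]
    using interpolation

variable {E : Type*} [NormedAddCommGroup E] [NormedSpace ℝ E]

theorem bijective_smul_add_of_lipschitzWith [CompleteSpace E] {f : E → E} {C : ℝ≥0} {t : ℝ}
    (hf : LipschitzWith C f) (ht : C < t) : Function.Bijective fun x => t • x + f x := by
  have t_pos : 0 < t := C.coe_nonneg.trans_lt ht
  refine Function.bijective_iff_existsUnique _ |>.2 fun y => ?_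
  have contracting : ContractingWith (C / t.toNNReal) fun x => t⁻¹ • (y - f x) := by
    refine ⟨by simpa [div_lt_one, t_pos] using (Real.lt_toNNReal_iff_coe_lt).2 ht,
      LipschitzWith.of_dist_le_mul fun x x' => ?_⟩
    rw [dist_smul₀, dist_sub_left, Real.norm_of_nonneg (by positivity), NNReal.coe_div,
      Real.coe_toNNReal _ t_pos.le, div_mul_eq_mul_div, ← inv_mul_eq_div]
    gcongr
    exact hf.dist_le_mul x x'
  have solution_iff (x : E) :
      t • x + f x = y ↔ Function.IsFixedPt (fun x => t⁻¹ • (y - f x)) x := by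
    rw [Function.IsFixedPt, inv_smul_eq_iff₀ t_pos.ne', sub_eq_iff_eq_add, eq_comm]
  simp only [solution_iff]
  exact ⟨_, contracting.fixedPoint_isFixedPt, fun _ => contracting.fixedPoint_unique⟩

variable [FiniteDimensional ℝ E]

theorem det_smul_id_add_pos {A : E →L[ℝ] E} {t : ℝ} (h : ‖A‖ < t) :
    0 < (t • ContinuousLinearMap.id ℝ E + A).det := by
  have := FiniteDimensional.complete ℝ E
  let d (s : ℝ) : ℝ := (t • ContinuousLinearMap.id ℝ E + s • A).det
  have d_cont : Continuous d := ContinuousLinearMap.continuous_det.comp (by fun_prop)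
  have d_zero : 0 < d 0 := by
    simpa [d, ContinuousLinearMap.det] using pow_pos ((norm_nonneg A).trans_lt h) _
  have d_ne_zero : ∀ s ∈ Icc (0 : ℝ) 1, d s ≠ 0 := by
    rintro s ⟨s_nonneg, s_le_one⟩
    have norm_lt : ‖s • A‖ < t :=
      calc ‖s • A‖ = s * ‖A‖ := by rw [norm_smul, Real.norm_of_nonneg s_nonneg]
        _ ≤ ‖A‖ := mul_le_of_le_one_left (norm_nonneg A) s_le_one
        _ < t := h
    have bij := bijective_smul_add_of_lipschitzWith (s • A).lipschitz norm_lt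
    exact (LinearEquiv.ofBijective
      ((t • ContinuousLinearMap.id ℝ E + s • A : E →L[ℝ] E) : E →ₗ[ℝ] E) bij).isUnit_det'.ne_zero
  by_contra! det_nonpos
  obtain ⟨s, hs, hds⟩ := intermediate_value_Icc' zero_le_one d_cont.continuousOn
    ⟨by simpa [d] using det_nonpos, d_zero.le⟩
  exact d_ne_zero s hs hds

theorem exists_contDiff_eq_one_nhds_of_isCompact {K : Set E} (hK : IsCompact K) :
    ∃ χ : E → ℝ, ∃ T, IsCompact T ∧ K ⊆ T ∧ ContDiff ℝ ∞ χ ∧ (∀ᶠ x in 𝓝ˢ K, χ x = 1) ∧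
      (∀ x ∉ T, χ x = 0) ∧ ∀ x, χ x ∈ Icc 0 1 := by
  obtain ⟨T, hT, hKT⟩ := exists_compact_superset hK
  obtain ⟨χ, χ_one, χ_zero, χ_mem⟩ :=
    exists_contMDiffMap_one_nhds_of_subset_interior (n := (⊤ : ℕ∞)) 𝓘(ℝ, E) hK.isClosed hKT
  exact ⟨χ, T, hT, hKT.trans interior_subset, χ.contMDiff.contDiff, χ_one, χ_zero, χ_mem⟩

variable [MeasurableSpace E] [BorelSpace E] {μ : Measure E} [μ.IsAddHaarMeasure]

theorem setIntegral_det_smul_id_add_fderiv {f : E → E} {C : ℝ≥0} {t : ℝ}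
    (hf : Differentiable ℝ f) (hfC : LipschitzWith C f) (ht : C < t) {K : Set E}
    (hK : MeasurableSet K) :
    ∫ x in K, (t • ContinuousLinearMap.id ℝ E + fderiv ℝ f x).det ∂μ =
      μ.real ((fun x => t • x + f x) '' K) := by
  have := FiniteDimensional.complete ℝ E
  have hasFDerivAt (x : E) : HasFDerivAt (fun x => t • x + f x)
      (t • ContinuousLinearMap.id ℝ E + fderiv ℝ f x) x :=
    ((hasFDerivAt_id x).const_smul t).add (hf x).hasFDerivAt
  have det_pos (x : E) : 0 < (t • ContinuousLinearMap.id ℝ E + fderiv ℝ f x).det :=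
    det_smul_id_add_pos ((norm_fderiv_le_of_lipschitz ℝ hfC).trans_lt ht)
  have change_of_variables := integral_image_eq_integral_abs_det_fderiv_smul μ hK
    (fun x _ => (hasFDerivAt x).hasFDerivWithinAt)
    (bijective_smul_add_of_lipschitzWith hfC ht).injective.injOn (fun _ => (1 : ℝ))
  simpa [abs_of_pos, det_pos] using change_of_variables.symm

theorem setIntegral_det_smul_id_add_fderiv_congr {f g : E → E} {C : ℝ≥0} {t : ℝ} {K : Set E}
    (hf : Differentiable ℝ f) (hg : Differentiable ℝ g) (hfC : LipschitzWith C f)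
    (hgC : LipschitzWith C g) (ht : C < t) (hK : MeasurableSet K) (hfg : EqOn f g Kᶜ) :
    ∫ x in K, (t • ContinuousLinearMap.id ℝ E + fderiv ℝ f x).det ∂μ =
      ∫ x in K, (t • ContinuousLinearMap.id ℝ E + fderiv ℝ g x).det ∂μ := by
  have := FiniteDimensional.complete ℝ E
  have image_eq : (fun x => t • x + f x) '' K = (fun x => t • x + g x) '' K := by
    rw [← compl_inj_iff, ← image_compl_eq (bijective_smul_add_of_lipschitzWith hfC ht),
      ← image_compl_eq (bijective_smul_add_of_lipschitzWith hgC ht)]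
    exact image_congr fun x hx => by rw [hfg hx]
  rw [setIntegral_det_smul_id_add_fderiv hf hfC ht hK, image_eq,
    setIntegral_det_smul_id_add_fderiv hg hgC ht hK]

theorem setIntegral_det_fderiv_congr_of_lipschitzWith {f g : E → E} {C : ℝ≥0} {K : Set E}
    (hf : ContDiff ℝ 1 f) (hg : ContDiff ℝ 1 g) (hfC : LipschitzWith C f)
    (hgC : LipschitzWith C g) (hK : IsCompact K) (hfg : EqOn f g Kᶜ) :
    ∫ x in K, (fderiv ℝ f x).det ∂μ = ∫ x in K, (fderiv ℝ g x).det ∂μ := by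
  have integrableOn {h : E → E} (hh : ContDiff ℝ 1 h) (t : ℝ) : IntegrableOn
      (fun x => (t • ContinuousLinearMap.id ℝ E + fderiv ℝ h x).det) K μ :=
    (ContinuousLinearMap.continuous_det.comp (continuous_const.add
      (hh.continuous_fderiv one_ne_zero))).continuousOn.integrableOn_compact hK
  -- The determinant of `t • id + D f` is a polynomial in `t`, so its integral at `t = 0` is
  -- determined by the values for large `t`, where `t • id + f` is a bijection.
  let v (k : ℕ) : ℝ := C + 1 + k
  have C_lt (k : ℕ) : C < v k := by
    have := k.cast_nonneg (α := ℝ)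
    simp only [v]
    linarith
  have v_inj : Function.Injective v := fun k l hkl => by simpa [v] using hkl
  have interpolation (A : E →L[ℝ] E) := det_eq_sum_det_smul_one_add v_inj.injOn
    (s := Finset.range (Module.finrank ℝ E + 1)) (by simp) (A : Module.End ℝ E)
  have integral_eq {h : E → E} (hh : ContDiff ℝ 1 h) :
      ∫ x in K, (fderiv ℝ h x).det ∂μ = ∑ k ∈ Finset.range (Module.finrank ℝ E + 1),
        (∫ x in K, (v k • ContinuousLinearMap.id ℝ E + fderiv ℝ h x).det ∂μ) *
          (Lagrange.basis (Finset.range (Module.finrank ℝ E + 1)) v k).eval 0 := by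
    simp_rw [← integral_mul_const]
    rw [← integral_finsetSum _ fun k _ => (integrableOn hh (v k)).mul_const _]
    exact integral_congr_ae (.of_forall fun x => interpolation _)
  rw [integral_eq hf, integral_eq hg]
  exact Finset.sum_congr rfl fun k _ => by
    rw [setIntegral_det_smul_id_add_fderiv_congr (hf.differentiable one_ne_zero)
      (hg.differentiable one_ne_zero) hfC hgC (C_lt k) hK.measurableSet hfg]

theorem setIntegral_det_fderiv_congr {f g : E → E} {K : Set E} (hf : ContDiff ℝ 1 f)
    (hg : ContDiff ℝ 1 g) (hK : IsCompact K) (hfg : EqOn f g Kᶜ) :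
    ∫ x in K, (fderiv ℝ f x).det ∂μ = ∫ x in K, (fderiv ℝ g x).det ∂μ := by
  obtain ⟨χ, T, hT, -, χ_smooth, χ_one, χ_zero, -⟩ := exists_contDiff_eq_one_nhds_of_isCompact hK
  have χ_C1 : ContDiff ℝ 1 χ := χ_smooth.of_le (by simp)
  have exists_lipschitz {h : E → E} (hh : ContDiff ℝ 1 h) :
      ∃ C, LipschitzWith C fun x => χ x • h x :=
    (χ_C1.smul hh).lipschitzWith_of_hasCompactSupport
      (HasCompactSupport.intro hT fun x hx => by simp [χ_zero x hx]) one_ne_zero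
  have integral_cutoff (h : E → E) :
      ∫ x in K, (fderiv ℝ (fun x => χ x • h x) x).det ∂μ = ∫ x in K, (fderiv ℝ h x).det ∂μ := by
    refine setIntegral_congr_fun hK.measurableSet fun x hx => ?_
    have eventuallyEq : (fun x => χ x • h x) =ᶠ[𝓝 x] h := by
      filter_upwards [eventually_nhdsSet_iff_forall.1 χ_one x hx] with y hy
      rw [hy, one_smul]
    simp only [eventuallyEq.fderiv_eq]
  obtain ⟨Cf, hCf⟩ := exists_lipschitz hf
  obtain ⟨Cg, hCg⟩ := exists_lipschitz hg
  rw [← integral_cutoff f, ← integral_cutoff g]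
  exact setIntegral_det_fderiv_congr_of_lipschitzWith (χ_C1.smul hf) (χ_C1.smul hg)
    (hCf.weaken (le_max_left Cf Cg)) (hCg.weaken (le_max_right Cf Cg)) hK
    fun x hx => by simp only [hfg hx]

end DetFDeriv

section RadialCollapse

/-- A smooth positive function equal to `1` on `(-∞, 0]` and to the identity on `[1, ∞)`. -/
noncomputable def collapseScale (t : ℝ) : ℝ := 1 + Real.smoothTransition t * (t - 1)

theorem contDiff_collapseScale : ContDiff ℝ 1 collapseScale :=
  contDiff_const.add (Real.smoothTransition.contDiff.mul (contDiff_id.sub contDiff_const))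

theorem collapseScale_pos (t : ℝ) : 0 < collapseScale t := by
  rw [collapseScale]
  rcases le_or_gt t 0 with ht | ht
  · simp [Real.smoothTransition.zero_of_nonpos ht]
  rcases lt_or_ge t 1 with ht' | ht'
  · nlinarith [Real.smoothTransition.le_one t]
  · nlinarith [Real.smoothTransition.nonneg t]

theorem deriv_smoothTransition_of_one_le {t : ℝ} (ht : 1 ≤ t) :
    deriv Real.smoothTransition t = 0 := by
  have isMax : IsLocalMax Real.smoothTransition t := .of_forall fun s => by
    rw [Real.smoothTransition.one_of_one_le ht]
    exact Real.smoothTransition.le_one s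
  exact isMax.deriv_eq_zero

theorem collapseScale_sub_mul_deriv (t : ℝ) :
    collapseScale t - t * deriv collapseScale t =
      1 - Real.smoothTransition t + t * (1 - t) * deriv Real.smoothTransition t := by
  have hasDerivAt : HasDerivAt collapseScale
      (deriv Real.smoothTransition t * (t - 1) + Real.smoothTransition t * 1) t :=
    (((Real.smoothTransition.contDiff (n := 1)).differentiable one_ne_zero t).hasDerivAt.mul
      ((hasDerivAt_id t).sub_const 1)).const_add 1
  rw [hasDerivAt.deriv, collapseScale]
  ring

theorem collapseScale_sub_mul_deriv_pos {t : ℝ} (ht₀ : 0 ≤ t) (ht₁ : t < 1) :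
    0 < collapseScale t - t * deriv collapseScale t := by
  rw [collapseScale_sub_mul_deriv]
  exact add_pos_of_pos_of_nonneg (sub_pos.2 (Real.smoothTransition.lt_one_of_lt_one ht₁))
    (mul_nonneg (mul_nonneg ht₀ (sub_nonneg.2 ht₁.le)) Real.smoothTransition.monotone.deriv_nonneg)

theorem collapseScale_sub_mul_deriv_eq_zero {t : ℝ} (ht : 1 ≤ t) :
    collapseScale t - t * deriv collapseScale t = 0 := by
  rw [collapseScale_sub_mul_deriv, deriv_smoothTransition_of_one_le ht,
    Real.smoothTransition.one_of_one_le ht]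
  ring

variable {E : Type*} [NormedAddCommGroup E] [InnerProductSpace ℝ E]

/-- A smooth radial map that is a diffeomorphism from the open unit ball onto itself and collapses
the exterior onto the unit sphere, so that its Jacobian determinant is supported in the closed unit
ball. -/
noncomputable def radialCollapse (y : E) : E := (√(collapseScale (‖y‖ ^ 2)))⁻¹ • y

theorem contDiff_radialCollapse : ContDiff ℝ 1 (radialCollapse : E → E) :=
  ((contDiff_collapseScale.comp (contDiff_norm_sq ℝ)).sqrt
    (fun _ => (collapseScale_pos _).ne')).inv
    (fun _ => (Real.sqrt_pos.2 (collapseScale_pos _)).ne') |>.smul contDiff_id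

variable [FiniteDimensional ℝ E]

open Module in
theorem det_fderiv_radialCollapse (y : E) :
    (fderiv ℝ radialCollapse y).det =
      (√(collapseScale (‖y‖ ^ 2)))⁻¹ ^ finrank ℝ E * (collapseScale (‖y‖ ^ 2))⁻¹ *
        (collapseScale (‖y‖ ^ 2) - ‖y‖ ^ 2 * deriv collapseScale (‖y‖ ^ 2)) := by
  set s := collapseScale (‖y‖ ^ 2)
  set s' := deriv collapseScale (‖y‖ ^ 2)
  have s_pos : 0 < s := collapseScale_pos _
  have hasDerivAt_factor : HasDerivAt (fun t => (√(collapseScale t))⁻¹)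
      (-(s' / (2 * √s)) / √s ^ 2) (‖y‖ ^ 2) :=
    ((contDiff_collapseScale.differentiable one_ne_zero _).hasDerivAt.sqrt s_pos.ne').inv
      (Real.sqrt_pos.2 s_pos).ne'
  have hasFDerivAt : HasFDerivAt radialCollapse ((√s)⁻¹ • ContinuousLinearMap.id ℝ E +
      ((-(s' / (2 * √s)) / √s ^ 2) • (2 • innerSL ℝ y)).smulRight y) y :=
    (hasDerivAt_factor.comp_hasFDerivAt_of_eq y
      (hasStrictFDerivAt_norm_sq y).hasFDerivAt rfl).smul (hasFDerivAt_id y)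
  have fderiv_eq : (fderiv ℝ radialCollapse y : E →ₗ[ℝ] E) =
      (√s)⁻¹ • LinearMap.transvection (-(s' / s) • (innerSL ℝ y : E →ₗ[ℝ] ℝ)) y := by
    rw [hasFDerivAt.fderiv]
    ext v
    have coefficient_eq : -(s' / (2 * √s)) / √s ^ 2 * (2 * inner ℝ y v) =
        (√s)⁻¹ * (-(s' / s) * inner ℝ y v) := by
      rw [Real.sq_sqrt s_pos.le]
      field_simp
    simp [LinearMap.transvection.apply, coefficient_eq, smul_smul]
  have transvection_det : (LinearMap.transvection
      (-(s' / s) • (innerSL ℝ y : E →ₗ[ℝ] ℝ)) y).det = s⁻¹ * (s - ‖y‖ ^ 2 * s') := by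
    rw [LinearMap.transvection.det]
    simp only [ContinuousLinearMap.toLinearMap_innerSL_apply, neg_smul, LinearMap.neg_apply,
      LinearMap.smul_apply, innerₛₗ_apply_apply, real_inner_self_eq_norm_sq, smul_eq_mul]
    field_simp
    ring
  rw [ContinuousLinearMap.det, fderiv_eq, LinearMap.det_smul, transvection_det, mul_assoc]

theorem det_fderiv_radialCollapse_pos {y : E} (hy : ‖y‖ < 1) :
    0 < (fderiv ℝ radialCollapse y).det := by
  rw [det_fderiv_radialCollapse]
  have scale_pos := collapseScale_pos (‖y‖ ^ 2)
  have := collapseScale_sub_mul_deriv_pos (sq_nonneg ‖y‖) (by nlinarith [norm_nonneg y])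
  positivity

theorem det_fderiv_radialCollapse_eq_zero {y : E} (hy : 1 ≤ ‖y‖) :
    (fderiv ℝ radialCollapse y).det = 0 := by
  rw [det_fderiv_radialCollapse, collapseScale_sub_mul_deriv_eq_zero (one_le_pow₀ hy), mul_zero]

theorem det_fderiv_radialCollapse_nonneg (y : E) : 0 ≤ (fderiv ℝ radialCollapse y).det := by
  rcases lt_or_ge ‖y‖ 1 with hy | hy
  · exact (det_fderiv_radialCollapse_pos hy).le
  · exact (det_fderiv_radialCollapse_eq_zero hy).ge

end RadialCollapse

section Degree

open MeasureTheory Set Filter Topology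

theorem tendsto_cocompact_of_norm_sub_le {X E : Type*} [TopologicalSpace X] [NormedAddCommGroup E]
    [ProperSpace E] {F G : X → E} {c : ℝ} (hF : Tendsto F (cocompact X) (cocompact E)) (hc : c < 1)
    (hFG : ∀ᶠ x in cocompact X, ‖G x - F x‖ ≤ c * ‖F x‖) :
    Tendsto G (cocompact X) (cocompact E) := by
  rw [← Metric.cobounded_eq_cocompact, ← tendsto_norm_atTop_iff_cobounded] at hF ⊢
  refine tendsto_atTop_mono' _ ?_ (hF.const_mul_atTop (sub_pos.2 hc))
  filter_upwards [hFG] with x hx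
  linarith [norm_sub_norm_le (F x) (G x), norm_sub_rev (F x) (G x)]

variable {E : Type*} [NormedAddCommGroup E] [InnerProductSpace ℝ E]

theorem det_fderiv_radialCollapse_comp {F : E → E} {x : E} (hF : DifferentiableAt ℝ F x) :
    (fderiv ℝ (radialCollapse ∘ F) x).det =
      (fderiv ℝ radialCollapse (F x)).det * (fderiv ℝ F x).det := by
  rw [fderiv_comp x (contDiff_radialCollapse.differentiable one_ne_zero _) hF]
  exact LinearMap.det_comp _ _

theorem continuous_det_fderiv_radialCollapse_comp {F : E → E} (hF : ContDiff ℝ 1 F) :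
    Continuous fun x => (fderiv ℝ (radialCollapse ∘ F) x).det :=
  ContinuousLinearMap.continuous_det.comp
    ((contDiff_radialCollapse.comp hF).continuous_fderiv one_ne_zero)

variable [FiniteDimensional ℝ E]

theorem det_fderiv_radialCollapse_comp_eq_zero {F : E → E} {x : E} (hF : DifferentiableAt ℝ F x)
    (hx : 1 ≤ ‖F x‖) : (fderiv ℝ (radialCollapse ∘ F) x).det = 0 := by
  rw [det_fderiv_radialCollapse_comp hF, det_fderiv_radialCollapse_eq_zero hx, zero_mul]

variable [MeasurableSpace E]

/-- For a proper `C¹` map `F`, this is the Brouwer degree of `F` over `0` times the volume of the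
unit ball, as the integral of the pullback under `F` of a volume form supported in that ball. -/
noncomputable def degreeIntegral (μ : Measure E) (F : E → E) : ℝ :=
  ∫ x, (fderiv ℝ (radialCollapse ∘ F) x).det ∂μ

variable {μ : Measure E}

theorem degreeIntegral_eq_setIntegral {F : E → E} {T : Set E} (hF : Differentiable ℝ F)
    (hT : ∀ x ∉ T, 1 ≤ ‖F x‖) :
    degreeIntegral μ F = ∫ x in T, (fderiv ℝ (radialCollapse ∘ F) x).det ∂μ :=
  (setIntegral_eq_integral_of_forall_compl_eq_zero fun x hx =>
    det_fderiv_radialCollapse_comp_eq_zero (hF x) (hT x hx)).symm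

variable [BorelSpace E] [μ.IsAddHaarMeasure]

theorem degreeIntegral_congr {F G : E → E} (hF : ContDiff ℝ 1 F) (hG : ContDiff ℝ 1 G)
    (hF_norm : ∀ᶠ x in cocompact E, 1 ≤ ‖F x‖) (hFG : F =ᶠ[cocompact E] G) :
    degreeIntegral μ F = degreeIntegral μ G := by
  obtain ⟨T, hT, hTFG⟩ := mem_cocompact'.1 (hF_norm.and hFG)
  have outside (x : E) (hx : x ∉ T) : 1 ≤ ‖F x‖ ∧ F x = G x := by
    by_contra h
    exact hx (hTFG h)
  rw [degreeIntegral_eq_setIntegral (hF.differentiable one_ne_zero) fun x hx => (outside x hx).1,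
    degreeIntegral_eq_setIntegral (hG.differentiable one_ne_zero) fun x hx =>
      (outside x hx).2 ▸ (outside x hx).1]
  exact setIntegral_det_fderiv_congr (contDiff_radialCollapse.comp hF)
    (contDiff_radialCollapse.comp hG) hT fun x hx =>
      congrArg radialCollapse (outside x hx).2

theorem degreeIntegral_eq_of_segment {F G : E → E} (hF : ContDiff ℝ 1 F) (hG : ContDiff ℝ 1 G)
    (h : ∀ᶠ x in cocompact E, ∀ z ∈ segment ℝ (F x) (G x), 1 ≤ ‖z‖) :
    degreeIntegral μ F = degreeIntegral μ G := by
  obtain ⟨K, hK, hK_segment⟩ := mem_cocompact'.1 h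
  have outside (x : E) (hx : x ∉ K) : ∀ z ∈ segment ℝ (F x) (G x), 1 ≤ ‖z‖ := by
    by_contra hz
    exact hx (hK_segment hz)
  obtain ⟨χ, T, hT, -, χ_smooth, χ_one, χ_zero, χ_mem⟩ :=
    exists_contDiff_eq_one_nhds_of_isCompact hK
  -- `H` agrees with `F` where `F` may be small and with `G` near infinity.
  let H (x : E) : E := G x + χ x • (F x - G x)
  have hH : ContDiff ℝ 1 H := hG.add ((χ_smooth.of_le (by simp)).smul (hF.sub hG))
  have H_mem_segment (x : E) : H x ∈ segment ℝ (F x) (G x) := by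
    rw [segment_symm, segment_eq_image']
    exact ⟨χ x, χ_mem x, rfl⟩
  have H_eventuallyEq_G : H =ᶠ[cocompact E] G := by
    filter_upwards [hT.compl_mem_cocompact] with x hx
    simp [H, χ_zero x hx]
  have F_degree_eq : degreeIntegral μ F = degreeIntegral μ H := by
    rw [degreeIntegral_eq_setIntegral (hF.differentiable one_ne_zero) fun x hx =>
        outside x hx _ (left_mem_segment ..),
      degreeIntegral_eq_setIntegral (hH.differentiable one_ne_zero) fun x hx =>
        outside x hx _ (H_mem_segment x)]
    refine setIntegral_congr_fun hK.measurableSet fun x hx => ?_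
    have F_eventuallyEq_H : radialCollapse ∘ F =ᶠ[𝓝 x] radialCollapse ∘ H := by
      filter_upwards [eventually_nhdsSet_iff_forall.1 χ_one x hx] with y hy
      simp [H, hy]
    simp only [F_eventuallyEq_H.fderiv_eq]
  exact F_degree_eq.trans (degreeIntegral_congr hH hG
    (h.mono fun x hx => hx _ (H_mem_segment x)) H_eventuallyEq_G)

theorem degreeIntegral_eq_of_norm_sub_le {F G : E → E} {c : ℝ} (hF : ContDiff ℝ 1 F)
    (hG : ContDiff ℝ 1 G) (hF_proper : Tendsto F (cocompact E) (cocompact E)) (hc : c < 1)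
    (hFG : ∀ᶠ x in cocompact E, ‖G x - F x‖ ≤ c * ‖F x‖) :
    degreeIntegral μ F = degreeIntegral μ G := by
  refine degreeIntegral_eq_of_segment hF hG ?_
  have F_large := (tendsto_norm_cocompact_atTop.comp hF_proper).eventually_ge_atTop (1 - c)⁻¹
  filter_upwards [hFG, F_large] with x hx hx_large z hz
  have one_le : 1 ≤ (1 - c) * ‖F x‖ := (inv_le_iff_one_le_mul₀' (sub_pos.2 hc)).1 hx_large
  have dist_le : ‖z - F x‖ ≤ ‖G x - F x‖ := norm_sub_le_of_mem_segment hz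
  linarith [norm_sub_norm_le (F x) z, norm_sub_rev (F x) z]

theorem degreeIntegral_eq_zero {F : E → E} (hF : ContDiff ℝ 1 F)
    (hF_proper : Tendsto F (cocompact E) (cocompact E)) (hF_ne : ∀ x, F x ≠ 0) :
    degreeIntegral μ F = 0 := by
  obtain ⟨x₀, hx₀⟩ := hF.continuous.norm.exists_forall_le
    (tendsto_norm_cocompact_atTop.comp hF_proper)
  have min_pos : 0 < ‖F x₀‖ := norm_pos_iff.2 (hF_ne x₀)
  have degree_eq : degreeIntegral μ F = degreeIntegral μ fun x => (1 + ‖F x₀‖⁻¹) • F x := by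
    refine degreeIntegral_eq_of_segment hF (contDiff_const.smul hF) ?_
    filter_upwards [(tendsto_norm_cocompact_atTop.comp hF_proper).eventually_ge_atTop 1]
      with x hx z hz
    rw [segment_eq_image'] at hz
    obtain ⟨t, ht, z_def⟩ := hz
    have z_eq : z = (1 + t * ‖F x₀‖⁻¹) • F x := by
      simp only [← z_def]
      module
    have factor_ge : 1 ≤ 1 + t * ‖F x₀‖⁻¹ :=
      le_add_of_nonneg_right (mul_nonneg ht.1 (inv_nonneg.2 (norm_nonneg _)))
    rw [z_eq, norm_smul, Real.norm_of_nonneg (zero_le_one.trans factor_ge)]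
    exact one_le_mul_of_one_le_of_one_le factor_ge hx
  rw [degree_eq, degreeIntegral]
  refine integral_eq_zero_of_ae (.of_forall fun x => det_fderiv_radialCollapse_comp_eq_zero
    ((hF.differentiable one_ne_zero x).const_smul _) ?_)
  calc 1 ≤ ‖F x₀‖⁻¹ * ‖F x₀‖ := (inv_mul_cancel₀ min_pos.ne').ge
    _ ≤ (1 + ‖F x₀‖⁻¹) * ‖F x‖ := by gcongr; exacts [by simp, hx₀ x]
    _ = ‖(1 + ‖F x₀‖⁻¹) • F x‖ := by rw [norm_smul, Real.norm_of_nonneg (by positivity)]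

theorem exists_eq_zero_of_degreeIntegral_ne_zero {F : E → E} (hF : ContDiff ℝ 1 F)
    (hF_proper : Tendsto F (cocompact E) (cocompact E)) (h : degreeIntegral μ F ≠ 0) :
    ∃ x, F x = 0 := by
  contrapose! h
  exact degreeIntegral_eq_zero hF hF_proper h

theorem exists_eq_zero_of_norm_sub_le {F G : E → E} {c : ℝ} (hF : ContDiff ℝ 1 F)
    (hG : ContDiff ℝ 1 G) (hF_proper : Tendsto F (cocompact E) (cocompact E)) (hc : c < 1)
    (hFG : ∀ᶠ x in cocompact E, ‖G x - F x‖ ≤ c * ‖F x‖) (h : degreeIntegral μ F ≠ 0) :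
    ∃ x, G x = 0 :=
  exists_eq_zero_of_degreeIntegral_ne_zero hG
    (tendsto_cocompact_of_norm_sub_le hF_proper hc hFG)
    ((degreeIntegral_eq_of_norm_sub_le (μ := μ) hF hG hF_proper hc hFG).symm.trans_ne h)

theorem degreeIntegral_pos {F : E → E} (hF : ContDiff ℝ 1 F)
    (hF_proper : Tendsto F (cocompact E) (cocompact E))
    (det_nonneg : ∀ x, 0 ≤ (fderiv ℝ F x).det) {x₀ : E} (hx₀ : ‖F x₀‖ < 1)
    (det_pos : 0 < (fderiv ℝ F x₀).det) : 0 < degreeIntegral μ F := by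
  have hF_diff := hF.differentiable one_ne_zero
  obtain ⟨T, hT, hT_norm⟩ := mem_cocompact'.1
    ((tendsto_norm_cocompact_atTop.comp hF_proper).eventually_ge_atTop 1)
  refine (continuous_det_fderiv_radialCollapse_comp hF)
    |>.integral_pos_of_hasCompactSupport_nonneg_nonzero
    (.intro hT fun x hx => det_fderiv_radialCollapse_comp_eq_zero (hF_diff x) ?_)
    (fun x => ?_) (x := x₀) ?_
  · by_contra h
    exact hx (hT_norm h)
  · rw [det_fderiv_radialCollapse_comp (hF_diff x)]
    exact mul_nonneg (det_fderiv_radialCollapse_nonneg _) (det_nonneg x)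
  · rw [det_fderiv_radialCollapse_comp (hF_diff x₀)]
    exact (mul_pos (det_fderiv_radialCollapse_pos hx₀) det_pos).ne'

end Degree

section PowerMap

open MeasureTheory

theorem det_nonneg_of_commute_of_mul_self_eq_neg_one {E : Type*} [AddCommGroup E] [Module ℝ E]
    [FiniteDimensional ℝ E] {J T : Module.End ℝ E} (hJ : J * J = -1) (hTJ : Commute T J) :
    0 ≤ T.det := by
  let : Module ℂ E := Module.compHom E (Complex.lift ⟨J, hJ⟩).toRingHom
  have smul_eq (z : ℂ) (v : E) : z • v = z.re • v + z.im • J v :=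
    congrArg (· v) (Complex.liftAux_apply J hJ z)
  have : IsScalarTower ℝ ℂ E := .of_algebraMap_smul fun r v => by simp [smul_eq]
  have : FiniteDimensional ℂ E := .right ℝ ℂ E
  let complexT : Module.End ℂ E :=
    { T with
      map_smul' z v := by
        have T_J_apply : T (J v) = J (T v) := congrArg (· v) hTJ.eq
        simp [smul_eq, T_J_apply] }
  have det_eq : T.det = Complex.normSq complexT.det := by
    rw [← Algebra.norm_complex_apply, ← LinearMap.det_restrictScalars]
    rfl
  exact det_eq ▸ Complex.normSq_nonneg _

section NormedAlgebra

variable {A : Type*} [NormedRing A] [NormedAlgebra ℝ A] [FiniteDimensional ℝ A]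

theorem det_fderiv_pow_nonneg_of_commute {J x : A} (hJ : J * J = -1) (hJx : Commute J x) (n : ℕ) :
    0 ≤ (fderiv ℝ (fun x : A => x ^ n) x).det := by
  refine det_nonneg_of_commute_of_mul_self_eq_neg_one (J := LinearMap.mulLeft ℝ J) ?_ ?_
  · ext1 v
    simp [← mul_assoc, hJ]
  · rw [(hasFDerivAt_pow' n).fderiv]
    ext1 v
    simp [Finset.mul_sum, ← mul_assoc, (hJx.pow_right _).eq]

theorem det_fderiv_pow_algebraMap_pos {n : ℕ} (hn : n ≠ 0) {r : ℝ} (hr : 0 < r) :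
    0 < (fderiv ℝ (fun x : A => x ^ n) (algebraMap ℝ A r)).det := by
  have fderiv_eq : fderiv ℝ (fun x : A => x ^ n) (algebraMap ℝ A r) =
      (n * r ^ (n - 1)) • ContinuousLinearMap.id ℝ A := by
    ext1 v
    have summand_eq (i : ℕ) (hi : i ∈ Finset.range n) :
        algebraMap ℝ A r ^ (n - 1 - i) * v * algebraMap ℝ A r ^ i = r ^ (n - 1) • v := by
      rw [mul_assoc, ← map_pow, ← map_pow, ← Algebra.commutes, ← mul_assoc, ← map_mul,
        ← pow_add, Nat.sub_add_cancel (by grind), Algebra.smul_def]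
    rw [(hasFDerivAt_pow' n).fderiv]
    simp [Finset.sum_congr rfl summand_eq, ← Nat.cast_smul_eq_nsmul ℝ, smul_smul]
  rw [fderiv_eq, ContinuousLinearMap.det, ContinuousLinearMap.toLinearMap_smul,
    LinearMap.det_smul, ContinuousLinearMap.coe_id, LinearMap.det_id]
  positivity

end NormedAlgebra

theorem exists_mul_self_eq_neg_one_and_commute (x : ℍ[ℝ]) :
    ∃ J : ℍ[ℝ], J * J = -1 ∧ Commute J x := by
  rcases eq_or_ne x.im 0 with him | him
  · refine ⟨ofComplex Complex.I, by rw [← map_mul, Complex.I_mul_I, map_neg, map_one], ?_⟩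
    rw [← x.re_add_im, him, add_zero]
    exact (Quaternion.coe_commute ..).symm
  · refine ⟨‖x.im‖⁻¹ • x.im, ?_, ?_⟩
    · have norm_ne_zero : ‖x.im‖ ≠ 0 := norm_ne_zero_iff.2 him
      rw [smul_mul_smul_comm, ← sq x.im, Quaternion.im_sq, Quaternion.normSq_eq_norm_mul_self,
        smul_neg, Quaternion.smul_coe, ← mul_inv,
        inv_mul_cancel₀ (mul_ne_zero norm_ne_zero norm_ne_zero), Quaternion.coe_one]
    · have commute_im : Commute x.im (x.re + x.im) :=
        (Quaternion.coe_commute ..).symm.add_right (.refl _)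
      rw [x.re_add_im] at commute_im
      exact commute_im.smul_left _

theorem degreeIntegral_quaternion_pow_pos [MeasurableSpace ℍ[ℝ]] [BorelSpace ℍ[ℝ]]
    {μ : Measure ℍ[ℝ]} [μ.IsAddHaarMeasure] {n : ℕ} (hn : n ≠ 0) :
    0 < degreeIntegral μ fun x : ℍ[ℝ] => x ^ n := by
  refine degreeIntegral_pos (contDiff_id.pow n) ?_ (fun x => ?_)
    (x₀ := algebraMap ℝ ℍ[ℝ] 2⁻¹) ?_ (det_fderiv_pow_algebraMap_pos hn (by norm_num))
  · rw [← Metric.cobounded_eq_cocompact]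
    exact tendsto_pow_cobounded_cobounded hn
  · obtain ⟨J, hJ, hJx⟩ := exists_mul_self_eq_neg_one_and_commute x
    exact det_fderiv_pow_nonneg_of_commute hJ hJx n
  · rw [norm_pow, norm_algebraMap']
    exact pow_lt_one₀ (norm_nonneg _) (by norm_num) hn

end PowerMap

section Monomial

open MeasureTheory Set Filter Topology Asymptotics

/-- The value at `x` of the monomial `b₀ x b₁ x ⋯ b_{t-1} x b_t`, as for `monval`, but with
coefficients in an arbitrary type with multiplication. -/
def monomialEval {A : Type*} [Mul A] : (t : ℕ) → (Fin (t + 1) → A) → A → A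
  | 0, b, _ => b 0
  | t + 1, b, x => b 0 * x * monomialEval t (Fin.tail b) x

theorem map_monval {c₁ c₂ : ℝ} {A F : Type*} [Mul A] [FunLike F ℍ[ℝ,c₁,c₂] A]
    [MulHomClass F ℍ[ℝ,c₁,c₂] A] (f : F) (t : ℕ) (b : Fin (t + 1) → ℍ[ℝ,c₁,c₂])
    (x : ℍ[ℝ,c₁,c₂]) : f (monval t b x) = monomialEval t (f ∘ b) (f x) := by
  induction t with
  | zero => rfl
  | succ t ih =>
    rw [monval, map_mul, map_mul, ih]
    rfl

theorem monomialEval_one {A : Type*} [Monoid A] (t : ℕ) (x : A) :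
    monomialEval t (fun _ => 1) x = x ^ t := by
  induction t with
  | zero => rw [monomialEval, pow_zero]
  | succ t ih =>
    rw [monomialEval, one_mul, pow_succ', ← ih]
    rfl

theorem contDiff_monomialEval {𝕜 A : Type*} [NontriviallyNormedField 𝕜] [NormedRing A]
    [NormedAlgebra 𝕜 A] {k : WithTop ℕ∞} (t : ℕ) (b : Fin (t + 1) → A) :
    ContDiff 𝕜 k (monomialEval t b) := by
  induction t with
  | zero => exact contDiff_const
  | succ t ih => exact (contDiff_const.mul contDiff_id).mul (ih _)

section NormedDivisionRing

variable {A : Type*} [NormedDivisionRing A]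

theorem norm_monomialEval (t : ℕ) (b : Fin (t + 1) → A) (x : A) :
    ‖monomialEval t b x‖ = (∏ i, ‖b i‖) * ‖x‖ ^ t := by
  induction t with
  | zero => simp [monomialEval]
  | succ t ih =>
    rw [monomialEval, norm_mul, norm_mul, ih, Fin.prod_univ_succ fun i => ‖b i‖]
    simp only [Fin.tail]
    ring

theorem exists_norm_monomialEval_sub_le (t : ℕ) (b : Fin (t + 1) → A) :
    ∃ δ : (Fin (t + 1) → A) → ℝ, Continuous δ ∧ δ b = 0 ∧
      ∀ b' x, ‖monomialEval t b' x - monomialEval t b x‖ ≤ δ b' * ‖x‖ ^ t := by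
  induction t with
  | zero =>
    exact ⟨fun b' => ‖b' 0 - b 0‖, by fun_prop, by simp, fun b' x => by simp [monomialEval]⟩
  | succ t ih =>
    obtain ⟨δ, δ_cont, δ_zero, δ_le⟩ := ih (Fin.tail b)
    have : Continuous (Fin.tail : (Fin (t + 2) → A) → Fin (t + 1) → A) :=
      continuous_pi fun i => continuous_apply i.succ
    refine ⟨fun b' => ‖b' 0 - b 0‖ * ∏ i, ‖Fin.tail b' i‖ + ‖b 0‖ * δ (Fin.tail b'), by fun_prop,
      by simp [δ_zero], fun b' x => ?_⟩
    calc ‖monomialEval (t + 1) b' x - monomialEval (t + 1) b x‖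
        = ‖(b' 0 - b 0) * x * monomialEval t (Fin.tail b') x +
            b 0 * x * (monomialEval t (Fin.tail b') x - monomialEval t (Fin.tail b) x)‖ := by
          simp only [monomialEval]
          noncomm_ring
      _ ≤ ‖b' 0 - b 0‖ * ‖x‖ * ((∏ i, ‖Fin.tail b' i‖) * ‖x‖ ^ t) +
            ‖b 0‖ * ‖x‖ * (δ (Fin.tail b') * ‖x‖ ^ t) := by
          refine (norm_add_le _ _).trans ?_
          simp only [norm_mul, norm_monomialEval]
          gcongr
          exact δ_le _ _
      _ = _ := by ring

theorem tendsto_monomialEval_cocompact [ProperSpace A] {n : ℕ} (hn : n ≠ 0) {b : Fin (n + 1) → A}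
    (hb : ∀ i, b i ≠ 0) : Tendsto (monomialEval n b) (cocompact A) (cocompact A) := by
  rw [← Metric.cobounded_eq_cocompact, ← tendsto_norm_atTop_iff_cobounded]
  simp only [norm_monomialEval]
  exact ((tendsto_pow_atTop hn).comp tendsto_norm_cobounded_atTop).const_mul_atTop
    (Finset.prod_pos fun i _ => norm_pos_iff.2 (hb i))

theorem isLittleO_monomialEval {t n : ℕ} (htn : t < n) (b : Fin (t + 1) → A) :
    monomialEval t b =o[Bornology.cobounded A] fun x => ‖x‖ ^ n := by
  refine (IsBigO.of_bound (∏ i, ‖b i‖) (.of_forall fun x => ?_)).trans_isLittleO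
    ((isLittleO_pow_pow_atTop_of_lt htn).comp_tendsto tendsto_norm_cobounded_atTop)
  simp [norm_monomialEval]

end NormedDivisionRing

theorem isPreconnected_setOf_forall_ne_zero {ι E : Type*} [AddCommGroup E] [Module ℝ E]
    [TopologicalSpace E] [ContinuousAdd E] [ContinuousSMul ℝ E] (h : 1 < Module.rank ℝ E) :
    IsPreconnected {b : ι → E | ∀ i, b i ≠ 0} := by
  simpa [Set.pi] using isPreconnected_univ_pi fun _ : ι =>
    (isConnected_compl_singleton_of_one_lt_rank h (0 : E)).isPreconnected

theorem degreeIntegral_monomialEval_pos [MeasurableSpace ℍ[ℝ]] [BorelSpace ℍ[ℝ]]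
    {μ : Measure ℍ[ℝ]} [μ.IsAddHaarMeasure] {n : ℕ} (hn : n ≠ 0) {b : Fin (n + 1) → ℍ[ℝ]}
    (hb : ∀ i, b i ≠ 0) : 0 < degreeIntegral μ (monomialEval n b) := by
  have degree_eq :
      degreeIntegral μ (monomialEval n b) = degreeIntegral μ fun x : ℍ[ℝ] => x ^ n := by
    simp only [← monomialEval_one]
    have rank_gt : 1 < Module.rank ℝ ℍ[ℝ] := by
      rw [Quaternion.rank_eq_four]
      norm_num
    refine (isPreconnected_setOf_forall_ne_zero rank_gt).induction₂
      (fun b b' => degreeIntegral μ (monomialEval n b) = degreeIntegral μ (monomialEval n b'))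
      (fun b hb => ?_) (fun _ _ _ _ _ _ => .trans) (fun _ _ _ _ => .symm) hb (fun _ => one_ne_zero)
    obtain ⟨δ, δ_cont, δ_zero, δ_le⟩ := exists_norm_monomialEval_sub_le n b
    have prod_pos : 0 < ∏ i, ‖b i‖ := Finset.prod_pos fun i _ => norm_pos_iff.2 (hb i)
    have δ_small : ∀ᶠ b' in 𝓝 b, δ b' < 1 / 2 * ∏ i, ‖b i‖ :=
      δ_cont.continuousAt.eventually_lt continuousAt_const (by rw [δ_zero]; positivity)
    filter_upwards [mem_nhdsWithin_of_mem_nhds δ_small] with b' hb'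
    refine degreeIntegral_eq_of_norm_sub_le (contDiff_monomialEval n b) (contDiff_monomialEval n b')
      (tendsto_monomialEval_cocompact hn hb) one_half_lt_one (.of_forall fun x => ?_)
    rw [norm_monomialEval, ← mul_assoc]
    exact (δ_le b' x).trans (by gcongr)
  exact degree_eq ▸ degreeIntegral_quaternion_pow_pos hn

theorem exists_monomialEval_add_eq_zero {n : ℕ} (hn : n ≠ 0) {b : Fin (n + 1) → ℍ[ℝ]}
    (hb : ∀ i, b i ≠ 0) {φ : ℍ[ℝ] → ℍ[ℝ]} (hφ : ContDiff ℝ 1 φ)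
    (hφ_littleO : φ =o[cocompact ℍ[ℝ]] fun x => ‖x‖ ^ n) :
    ∃ x, monomialEval n b x + φ x = 0 := by
  let : MeasurableSpace ℍ[ℝ] := borel ℍ[ℝ]
  have : BorelSpace ℍ[ℝ] := ⟨rfl⟩
  have prod_pos : 0 < ∏ i, ‖b i‖ := Finset.prod_pos fun i _ => norm_pos_iff.2 (hb i)
  refine exists_eq_zero_of_norm_sub_le (contDiff_monomialEval n b)
    ((contDiff_monomialEval n b).add hφ) (tendsto_monomialEval_cocompact hn hb) one_half_lt_one ?_
    (degreeIntegral_monomialEval_pos (μ := Measure.addHaar) hn hb).ne'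
  filter_upwards [hφ_littleO.def (half_pos prod_pos)] with x hx
  simpa [norm_monomialEval, div_eq_inv_mul, mul_assoc] using hx

theorem exists_monomialEval_add_sum_eq_zero {n : ℕ} (hn : n ≠ 0) {a : Fin (n + 1) → ℍ[ℝ]}
    (ha : ∀ i, a i ≠ 0) {ι : Type*} [Fintype ι] {t : ι → ℕ} (ht : ∀ j, t j < n)
    (b : (j : ι) → Fin (t j + 1) → ℍ[ℝ]) :
    ∃ x, monomialEval n a x + ∑ j, monomialEval (t j) (b j) x = 0 := by
  refine exists_monomialEval_add_eq_zero hn ha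
    (.sum fun j _ => contDiff_monomialEval (t j) (b j)) ?_
  rw [← Metric.cobounded_eq_cocompact]
  exact IsLittleO.fun_sum fun j _ => isLittleO_monomialEval (ht j) (b j)

end Monomial

/-- The isomorphism of quaternion algebras that multiplies the generators `i` and `j` by `p` and
`q`. -/
def rescaleEquiv {K : Type*} [Field K] {c₁ c₂ d₁ d₂ p q : K} (hp : p ≠ 0) (hq : q ≠ 0)
    (hd₁ : d₁ = p ^ 2 * c₁) (hd₂ : d₂ = q ^ 2 * c₂) : ℍ[K,d₁,d₂] ≃+* ℍ[K,c₁,c₂] where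
  toFun x := ⟨x.re, p * x.imI, q * x.imJ, p * q * x.imK⟩
  invFun x := ⟨x.re, p⁻¹ * x.imI, q⁻¹ * x.imJ, p⁻¹ * q⁻¹ * x.imK⟩
  left_inv x := by ext <;> simp <;> field_simp
  right_inv x := by ext <;> simp <;> field_simp
  map_add' x y := by ext <;> simp [mul_add]
  map_mul' x y := by
    subst hd₁ hd₂
    ext <;> simp <;> ring

/-- In `H(γ₁,γ₂)` with `γ₁, γ₂ > 0`, every polynomial function of the form
`f(x) = a₀xa₁x⋯a_{n-1}xa_n + φ(x)`, where the `aᵢ` are nonzero and `φ` is a finite sum of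
monomials `b₀xb₁x⋯b_{t-1}xb_t` of degree `t < n`, has at least one root. -/
theorem statement7 (γ₁ γ₂ : ℝ) (h₁ : 0 < γ₁) (h₂ : 0 < γ₂) (n : ℕ) (hn : 1 ≤ n)
    (a : Fin (n + 1) → ℍ[ℝ, -γ₁, -γ₂]) (ha : ∀ i, a i ≠ 0)
    (m : ℕ) (t : Fin m → ℕ) (ht : ∀ j, t j < n)
    (b : (j : Fin m) → Fin (t j + 1) → ℍ[ℝ, -γ₁, -γ₂]) :
    ∃ x : ℍ[ℝ, -γ₁, -γ₂], monval n a x + ∑ j, monval (t j) (b j) x = 0 := by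
  let e : ℍ[ℝ,-γ₁,-γ₂] ≃+* ℍ[ℝ] := rescaleEquiv (p := √γ₁) (q := √γ₂) (by positivity)
    (by positivity) (by simp [h₁.le]) (by simp [h₂.le])
  obtain ⟨y, hy⟩ := exists_monomialEval_add_sum_eq_zero (Nat.one_le_iff_ne_zero.1 hn)
    (a := e ∘ a) (fun i => (map_ne_zero_iff e e.injective).2 (ha i)) ht (fun j => e ∘ b j)
  refine ⟨e.symm y, e.injective ?_⟩
  simpa [map_monval] using hy
end

section
/- For every non-real octonion a ∈ O(1,1,1), the equation xⁿ = a has exactly n roots, given by x_r = N(a)^{1/(2n)} (cos((λ+2rπ)/n) + w sin((λ+2rπ)/n)) for r = 0,1,…,n-1, where a/√N(a) = cos λ + w sin λ with w the normalized imaginary part of a. -/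
open Quaternion

/-- The division octonion algebra `O(1,1,1)`, realized via the Cayley–Dickson construction
on the Hamilton quaternions: pairs `(a, b)` multiplying by `(a,b)(c,d) = (ac - d̄b, da + bc̄)`.
In this picture `f₁ = (i,0), f₂ = (j,0), f₃ = (k,0), f₄ = (0,1), f₅ = (0,i), f₆ = (0,j),
f₇ = (0,k)`. -/
abbrev OctD : Type := ℍ[ℝ] × ℍ[ℝ]

/-- Octonion multiplication on `O(1,1,1)`. -/
noncomputable def omul (x y : OctD) : OctD :=
  (x.1 * y.1 - star y.2 * x.2, y.2 * x.1 + x.2 * star y.1)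

/-- The octonion unit `1`. -/
noncomputable def oone : OctD := ((1 : ℍ[ℝ]), 0)

/-- Octonion powers `xⁿ` (well defined by power-associativity). -/
noncomputable def opow (x : OctD) : ℕ → OctD
  | 0 => oone
  | n + 1 => omul x (opow x n)

/-- The octonion norm `N(a) = Σₖ aₖ²`. -/
noncomputable def octNormSq (x : OctD) : ℝ := Quaternion.normSq x.1 + Quaternion.normSq x.2

/-- The octonion trace `t(a) = 2a₀`. -/
noncomputable def octTrace (x : OctD) : ℝ := 2 * x.1.re

/-- The imaginary part of an octonion. -/
noncomputable def oim (x : OctD) : OctD := ((⟨0, x.1.imI, x.1.imJ, x.1.imK⟩ : ℍ[ℝ]), x.2)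

/-!
Every octonion lies in a slice `ℝ1 + ℝu` with `u` an imaginary unit, and since `u² = -1` this slice
is a copy of `ℂ` on which octonion powers are complex powers. If `xⁿ = a` with `a` non-real and `x`
in the slice of `u`, then comparing imaginary parts shows that `u` is parallel to the imaginary part
of `a`. So all roots lie in the slice of `a` itself, where they are the complex `n`-th roots.
-/

lemma octNormSq_smul (c : ℝ) (x : OctD) : octNormSq (c • x) = c ^ 2 * octNormSq x := by
  simp only [octNormSq, Prod.smul_fst, Prod.smul_snd, Quaternion.normSq_smul, mul_add]

lemma octNormSq_nonneg (x : OctD) : 0 ≤ octNormSq x :=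
  add_nonneg Quaternion.normSq_nonneg Quaternion.normSq_nonneg

lemma octNormSq_eq_zero {x : OctD} : octNormSq x = 0 ↔ x = 0 := by
  rw [octNormSq, add_eq_zero_iff_of_nonneg Quaternion.normSq_nonneg Quaternion.normSq_nonneg,
    Quaternion.normSq_eq_zero, Quaternion.normSq_eq_zero, ← Prod.mk_eq_zero]

lemma octNormSq_pos_iff {x : OctD} : 0 < octNormSq x ↔ x ≠ 0 := by
  rw [(octNormSq_nonneg x).lt_iff_ne', Ne, octNormSq_eq_zero]

lemma oim_eq_im (x : OctD) : oim x = (x.1.im, x.2) :=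
  rfl

lemma re_smul_oone_add_oim (x : OctD) : x.1.re • oone + oim x = x := by
  have hfst : x.1.re • (1 : ℍ[ℝ]) + x.1.im = x.1 := by
    rw [← Algebra.algebraMap_eq_smul_one, Quaternion.algebraMap_def, Quaternion.re_add_im]
  ext1
  · exact hfst
  · simp [oone, oim_eq_im]

lemma oim_eq_zero_iff {x : OctD} : oim x = 0 ↔ ∃ r : ℝ, x = r • oone := by
  constructor
  · intro hx
    exact ⟨x.1.re, by simpa only [hx, add_zero] using (re_smul_oone_add_oim x).symm⟩
  · rintro ⟨r, rfl⟩
    simp [oim_eq_im, oone]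

lemma add_omul (x y z : OctD) : omul (x + y) z = omul x z + omul y z := by
  ext1 <;> simp only [omul, Prod.fst_add, Prod.snd_add, add_mul, mul_add] <;> abel

lemma omul_add (x y z : OctD) : omul x (y + z) = omul x y + omul x z := by
  ext1 <;> simp only [omul, Prod.fst_add, Prod.snd_add, star_add, add_mul, mul_add] <;> abel

lemma smul_omul (c : ℝ) (x y : OctD) : omul (c • x) y = c • omul x y := by
  ext1 <;> simp [omul, smul_sub]

lemma omul_smul (c : ℝ) (x y : OctD) : omul x (c • y) = c • omul x y := by
  ext1 <;> simp [omul, smul_sub]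

lemma oone_omul (x : OctD) : omul oone x = x := by
  simp [omul, oone]

lemma omul_oone (x : OctD) : omul x oone = x := by
  simp [omul, oone]

lemma omul_self_of_re_eq_zero {x : OctD} (hx : x.1.re = 0) :
    omul x x = -octNormSq x • oone := by
  have hstar : star x.1 = -x.1 := Quaternion.star_eq_neg.2 hx
  have hsq : x.1 * x.1 = -((Quaternion.normSq x.1 : ℝ) : ℍ[ℝ]) := by
    rw [← Quaternion.self_mul_star, hstar, mul_neg, neg_neg]
  ext1
  · simp only [omul, oone, octNormSq, hsq, Quaternion.star_mul_self, Prod.smul_fst]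
    rw [← Algebra.algebraMap_eq_smul_one, Quaternion.algebraMap_def, Quaternion.coe_neg,
      Quaternion.coe_add, neg_add, sub_eq_add_neg]
  · simp [omul, oone, hstar]

/-- An imaginary unit is an octonion of trace zero (stated through its real part) and norm one,
hence a square root of `-1`. -/
structure IsImaginaryUnit (u : OctD) : Prop where
  re_eq_zero : u.1.re = 0
  octNormSq_eq_one : octNormSq u = 1

lemma isImaginaryUnit_normalize_oim {x : OctD} (hx : oim x ≠ 0) :
    IsImaginaryUnit ((√(octNormSq (oim x)))⁻¹ • oim x) where
  re_eq_zero := by simp [oim_eq_im]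
  octNormSq_eq_one := by
    rw [octNormSq_smul, inv_pow, Real.sq_sqrt (octNormSq_nonneg _),
      inv_mul_cancel₀ (octNormSq_pos_iff.2 hx).ne']

lemma isImaginaryUnit_zero_one : IsImaginaryUnit (0, 1) := by
  constructor <;> simp [octNormSq]

/-- The slice `ℝ1 + ℝu` of the octonions, parametrized by `x + iy ↦ x1 + yu`. It is an embedding
of algebras when `u` is an imaginary unit. -/
noncomputable def complexSlice (u : OctD) : ℂ →ₗ[ℝ] OctD :=
  Complex.reLm.smulRight oone + Complex.imLm.smulRight u

lemma complexSlice_apply (u : OctD) (z : ℂ) : complexSlice u z = z.re • oone + z.im • u :=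
  rfl

lemma re_complexSlice {u : OctD} (hu : u.1.re = 0) (z : ℂ) : (complexSlice u z).1.re = z.re := by
  simp [complexSlice_apply, oone, hu]

lemma oim_complexSlice {u : OctD} (hu : u.1.re = 0) (z : ℂ) :
    oim (complexSlice u z) = z.im • u := by
  have h := re_smul_oone_add_oim (complexSlice u z)
  rw [re_complexSlice hu, complexSlice_apply] at h
  exact add_left_cancel h

lemma complexSlice_ofReal_mul_exp (u : OctD) (p θ : ℝ) :
    complexSlice u (p * Complex.exp (θ * Complex.I)) =
      p • (Real.cos θ • oone + Real.sin θ • u) := by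
  rw [complexSlice_apply, Complex.re_ofReal_mul, Complex.im_ofReal_mul,
    Complex.exp_ofReal_mul_I_re, Complex.exp_ofReal_mul_I_im, smul_add, smul_smul, smul_smul]

lemma exists_complexSlice_eq (x : OctD) :
    ∃ u z, IsImaginaryUnit u ∧ complexSlice u z = x := by
  by_cases hx : oim x = 0
  · refine ⟨_, x.1.re, isImaginaryUnit_zero_one, ?_⟩
    simpa [complexSlice_apply, hx] using re_smul_oone_add_oim x
  · refine ⟨_, ⟨x.1.re, √(octNormSq (oim x))⟩, isImaginaryUnit_normalize_oim hx, ?_⟩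
    have hnorm : √(octNormSq (oim x)) ≠ 0 := (Real.sqrt_pos.2 (octNormSq_pos_iff.2 hx)).ne'
    rw [complexSlice_apply, smul_inv_smul₀ hnorm, re_smul_oone_add_oim]

namespace IsImaginaryUnit

variable {u : OctD}

lemma ne_zero (hu : IsImaginaryUnit u) : u ≠ 0 :=
  octNormSq_pos_iff.1 (hu.octNormSq_eq_one ▸ one_pos)

lemma omul_self (hu : IsImaginaryUnit u) : omul u u = -oone := by
  rw [omul_self_of_re_eq_zero hu.re_eq_zero, hu.octNormSq_eq_one, neg_one_smul]

lemma complexSlice_mul (hu : IsImaginaryUnit u) (z z' : ℂ) :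
    complexSlice u (z * z') = omul (complexSlice u z) (complexSlice u z') := by
  simp only [complexSlice_apply, Complex.mul_re, Complex.mul_im, add_omul, omul_add, smul_omul,
    omul_smul, oone_omul, omul_oone, hu.omul_self]
  module

lemma complexSlice_pow (hu : IsImaginaryUnit u) (z : ℂ) (n : ℕ) :
    complexSlice u (z ^ n) = opow (complexSlice u z) n := by
  induction n with
  | zero => simp [opow, complexSlice_apply]
  | succ n ih => rw [opow, ← ih, ← hu.complexSlice_mul, pow_succ']

lemma complexSlice_injective (hu : IsImaginaryUnit u) : Function.Injective (complexSlice u) := by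
  intro z z' h
  refine Complex.ext ?_ (smul_left_injective ℝ hu.ne_zero ?_)
  · rw [← re_complexSlice hu.re_eq_zero z, h, re_complexSlice hu.re_eq_zero]
  · simpa only [oim_complexSlice hu.re_eq_zero] using congrArg oim h

lemma mem_range_complexSlice_of_opow_eq (hu : IsImaginaryUnit u) {x : OctD} {z : ℂ} {n : ℕ}
    (hz : z.im ≠ 0) (hx : opow x n = complexSlice u z) : x ∈ Set.range (complexSlice u) := by
  obtain ⟨v, y, hv, rfl⟩ := exists_complexSlice_eq x
  have him : (y ^ n).im • v = z.im • u := by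
    rw [← oim_complexSlice hv.re_eq_zero, hv.complexSlice_pow, hx, oim_complexSlice hu.re_eq_zero]
  have hyn : (y ^ n).im ≠ 0 := fun h =>
    smul_ne_zero hz hu.ne_zero (by rw [← him, h, zero_smul])
  have hvu : v = ((y ^ n).im⁻¹ * z.im) • u := by rw [mul_smul, ← him, inv_smul_smul₀ hyn]
  refine ⟨⟨y.re, y.im * ((y ^ n).im⁻¹ * z.im)⟩, ?_⟩
  rw [complexSlice_apply, complexSlice_apply, mul_smul, ← hvu]

lemma setOf_opow_eq_complexSlice (hu : IsImaginaryUnit u) {z : ℂ} (hz : z.im ≠ 0) (n : ℕ) :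
    {x : OctD | opow x n = complexSlice u z} = complexSlice u '' {y : ℂ | y ^ n = z} := by
  ext x
  constructor
  · intro hx
    obtain ⟨y, rfl⟩ := hu.mem_range_complexSlice_of_opow_eq hz hx
    exact ⟨y, hu.complexSlice_injective ((hu.complexSlice_pow y n).trans hx), rfl⟩
  · rintro ⟨y, rfl, rfl⟩
    exact (hu.complexSlice_pow y n).symm

end IsImaginaryUnit

/-- The `r`-th root `p exp(i(θ + 2rπ)/n)` of `pⁿ exp(iθ)`; the modulus parameter `p` is that of the
root, not that of its `n`-th power. -/
noncomputable def polarRoot (p θ : ℝ) (n r : ℕ) : ℂ :=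
  p * Complex.exp (((θ + 2 * r * Real.pi) / n : ℝ) * Complex.I)

lemma complexSlice_polarRoot (u : OctD) (p θ : ℝ) (n r : ℕ) :
    complexSlice u (polarRoot p θ n r) =
      p • (Real.cos ((θ + 2 * r * Real.pi) / n) • oone +
        Real.sin ((θ + 2 * r * Real.pi) / n) • u) :=
  complexSlice_ofReal_mul_exp ..

lemma polarRoot_eq_exp_pow_mul (p θ : ℝ) (n r : ℕ) :
    polarRoot p θ n r =
      Complex.exp (2 * Real.pi * Complex.I / n) ^ r * polarRoot p θ n 0 := by
  rw [polarRoot, polarRoot, mul_left_comm, ← Complex.exp_nat_mul, ← Complex.exp_add]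
  push_cast
  ring_nf

lemma polarRoot_zero_pow (p θ : ℝ) {n : ℕ} (hn : n ≠ 0) :
    polarRoot p θ n 0 ^ n = (p ^ n : ℝ) * Complex.exp (θ * Complex.I) := by
  rw [polarRoot, mul_pow, ← Complex.exp_nat_mul]
  push_cast
  congr 2
  field_simp
  ring

lemma polarRoot_injective {p : ℝ} (hp : p ≠ 0) (θ : ℝ) (n : ℕ) :
    Function.Injective fun r : Fin n => polarRoot p θ n r := by
  intro r s hrs
  have hζ := Complex.isPrimitiveRoot_exp n r.pos.ne'
  have hzero : polarRoot p θ n 0 ≠ 0 :=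
    mul_ne_zero (Complex.ofReal_ne_zero.2 hp) (Complex.exp_ne_zero _)
  simp only [polarRoot_eq_exp_pow_mul p θ n r, polarRoot_eq_exp_pow_mul p θ n s] at hrs
  exact Fin.ext (hζ.pow_inj r.isLt s.isLt (mul_right_cancel₀ hzero hrs))

lemma setOf_pow_eq_range_polarRoot (p θ : ℝ) {n : ℕ} (hn : n ≠ 0) :
    {y : ℂ | y ^ n = (p ^ n : ℝ) * Complex.exp (θ * Complex.I)} =
      Set.range fun r : Fin n => polarRoot p θ n r := by
  ext y
  rw [Set.mem_ofPred_eq, ← Polynomial.mem_nthRoots hn.pos,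
    (Complex.isPrimitiveRoot_exp n hn).nthRoots_eq (polarRoot_zero_pow p θ hn)]
  simp only [← polarRoot_eq_exp_pow_mul, Multiset.mem_map, Multiset.mem_range, Set.mem_range,
    Fin.exists_iff, exists_prop]

lemma rpow_one_div_two_mul_pow {x : ℝ} (hx : 0 ≤ x) {n : ℕ} (hn : n ≠ 0) :
    (x ^ ((1 : ℝ) / (2 * n))) ^ n = √x := by
  rw [one_div, mul_inv, Real.rpow_mul hx, Real.rpow_inv_natCast_pow (by positivity) hn,
    Real.sqrt_eq_rpow, one_div]

/-- for every non-real octonion `a ∈ O(1,1,1)`, the equation `xⁿ = a` has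
exactly `n` roots, namely `x_r = N(a)^{1/(2n)} (cos((λ+2rπ)/n) + w sin((λ+2rπ)/n))`,
`r = 0, …, n-1`, where `a/√N(a) = cos λ + w sin λ` with `w` the normalized imaginary part
of `a` and `sin λ > 0`. -/
theorem statement15 (a : OctD) (hnr : ¬∃ r : ℝ, a = r • oone) (n : ℕ) (hn : 1 ≤ n)
    (w : OctD) (hw : w = (Real.sqrt (octNormSq (oim a)))⁻¹ • oim a)
    (lam : ℝ) (hsin : 0 < Real.sin lam)
    (hdec : a = Real.sqrt (octNormSq a) • (Real.cos lam • oone + Real.sin lam • w)) :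
    (∀ r : Fin n,
      opow ((octNormSq a ^ ((1 : ℝ) / (2 * n))) •
        (Real.cos ((lam + 2 * (r : ℕ) * Real.pi) / n) • oone
          + Real.sin ((lam + 2 * (r : ℕ) * Real.pi) / n) • w)) n = a) ∧
    Function.Injective (fun r : Fin n =>
      (octNormSq a ^ ((1 : ℝ) / (2 * n))) •
        (Real.cos ((lam + 2 * (r : ℕ) * Real.pi) / n) • oone
          + Real.sin ((lam + 2 * (r : ℕ) * Real.pi) / n) • w)) ∧
    {x : OctD | opow x n = a} = Set.range (fun r : Fin n =>
      (octNormSq a ^ ((1 : ℝ) / (2 * n))) •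
        (Real.cos ((lam + 2 * (r : ℕ) * Real.pi) / n) • oone
          + Real.sin ((lam + 2 * (r : ℕ) * Real.pi) / n) • w)) := by
  have hn0 : n ≠ 0 := Nat.one_le_iff_ne_zero.1 hn
  have hunit : IsImaginaryUnit w := hw ▸ isImaginaryUnit_normalize_oim (mt oim_eq_zero_iff.1 hnr)
  have hN : 0 < octNormSq a := octNormSq_pos_iff.2 fun h => hnr ⟨0, by rw [h, zero_smul]⟩
  have hmod := rpow_one_div_two_mul_pow hN.le hn0
  have hmod_ne : octNormSq a ^ ((1 : ℝ) / (2 * n)) ≠ 0 := (Real.rpow_pos_of_pos hN _).ne'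
  generalize octNormSq a ^ ((1 : ℝ) / (2 * n)) = p at hmod hmod_ne ⊢
  set z : ℂ := (p ^ n : ℝ) * Complex.exp (lam * Complex.I) with hz
  have ha : a = complexSlice w z := by rwa [hz, complexSlice_ofReal_mul_exp, hmod]
  have hz_im : z.im ≠ 0 := by
    rw [hz, Complex.im_ofReal_mul, Complex.exp_ofReal_mul_I_im, hmod]
    exact (mul_pos (Real.sqrt_pos.2 hN) hsin).ne'
  simp only [← complexSlice_polarRoot]
  have hroots : {x : OctD | opow x n = a} =
      Set.range (fun r : Fin n => complexSlice w (polarRoot p lam n r)) := by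
    rw [ha, hunit.setOf_opow_eq_complexSlice hz_im, hz, setOf_pow_eq_range_polarRoot p lam hn0,
      ← Set.range_comp]
    rfl
  exact ⟨fun r => hroots.ge ⟨r, rfl⟩,
    hunit.complexSlice_injective.comp (polarRoot_injective hmod_ne lam n), hroots⟩
end
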